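/- Fix positive integers d_1,…,d_r. Then the family of real numbers 1/[K_{w,N,T} : K], indexed by all pairs of r-tuples T = (t_1,…,t_r) and N = (n_1,…,n_r) of positive integers, is summable; that is, the double series ∑_T ∑_N 1/[K_{w,N,T} : K] converges. -/

import Mathlib

open scoped BigOperators

/-- A fixed primitive `n`-th root of unity in `ℂ` (for `n ≥ 1`). -/
noncomputable def primRoot (n : ℕ) : ℂ := Complex.exp (2 * Real.pi * Complex.I / n)

/-- The subfield `K(ζ_n, α_1^{1/t_1}, …, α_r^{1/t_r})` of `ℂ`, obtained by adjoining to `K`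
a primitive `n`-th root of unity and, for each `i`, all complex roots of `X^{t_i} - α_i`. -/
noncomputable def kummerField (K : IntermediateField ℚ ℂ) {r : ℕ} (α : Fin r → ℂ)
    (n : ℕ) (t : Fin r → ℕ) : IntermediateField ℚ ℂ :=
  K ⊔ IntermediateField.adjoin ℚ ({primRoot n} ∪ ⋃ i, {z : ℂ | z ^ (t i) = α i})

/-- The cyclotomic extension `K(ζ_n)` of `K` inside `ℂ`. -/
noncomputable def cycloField (K : IntermediateField ℚ ℂ) (n : ℕ) : IntermediateField ℚ ℂ :=
  K ⊔ IntermediateField.adjoin ℚ {primRoot n}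

lemma cyclo_le_kummer (K : IntermediateField ℚ ℂ) {r : ℕ} (α : Fin r → ℂ)
    (n : ℕ) (t : Fin r → ℕ) : cycloField K n ≤ kummerField K α n t :=
  sup_le_sup_left (IntermediateField.adjoin.mono _ _ _ Set.subset_union_left) _

lemma base_le_kummer (K : IntermediateField ℚ ℂ) {r : ℕ} (α : Fin r → ℂ)
    (n : ℕ) (t : Fin r → ℕ) : K ≤ kummerField K α n t :=
  le_sup_left

section helpers
open IntermediateField

theorem two_mul_totient_sq_odd (n : ℕ) : Odd n → n ≤ n.totient ^ 2 := by
  induction n using Nat.recOnPosPrimePosCoprime with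
  | zero => intro h; simp
  | one => intro h; simp
  | prime_pow p k hp hk =>
    intro h
    have hp3 : 3 ≤ p := by
      have := hp.two_le
      rcases Nat.lt_or_ge p 3 with h3 | h3
      · have : p = 2 := by omega
        subst this
        rw [Nat.odd_pow_iff hk.ne'] at h
        exact absurd h (by decide)
      · exact h3
    rw [Nat.totient_prime_pow hp hk]
    obtain ⟨k, rfl⟩ : ∃ j, k = j + 1 := ⟨k - 1, by omega⟩
    obtain ⟨q, rfl⟩ : ∃ j, p = j + 3 := ⟨p - 3, by omega⟩
    simp only [Nat.add_sub_cancel, pow_succ, show q + 3 - 1 = q + 2 by omega]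
    have : 1 ≤ (q+3)^k := Nat.one_le_pow _ _ (by omega)
    set A := (q+3)^k
    nlinarith [Nat.mul_le_mul this (Nat.mul_le_mul_left A (show q + 3 ≤ (q+2)*(q+2) by nlinarith))]
  | coprime a b ha hb hab iha ihb =>
    intro h
    rw [Nat.odd_mul] at h
    rw [Nat.totient_mul hab, mul_pow]
    exact Nat.mul_le_mul (iha h.1) (ihb h.2)

theorem le_two_mul_totient_sq (n : ℕ) : n ≤ 2 * n.totient ^ 2 := by
  rcases Nat.eq_zero_or_pos n with rfl | hn
  · simp
  obtain ⟨k, m, hm, rfl⟩ := Nat.exists_eq_two_pow_mul_odd hn.ne'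
  have h1 := two_mul_totient_sq_odd m hm
  rw [Nat.totient_mul (Nat.Coprime.pow_left k (Nat.coprime_two_left.2 hm)), mul_pow, ← mul_assoc]
  refine Nat.mul_le_mul ?_ h1
  rcases k with _ | k
  · simp
  · rw [Nat.totient_prime_pow Nat.prime_two (by omega)]
    simp [pow_succ]
    nlinarith [Nat.one_le_pow k 2 (by omega)]

theorem totient_le_finrank_rat {E : Type*} [Field E] [CharZero E] [hA : Algebra ℚ E] [FiniteDimensional ℚ E]
    {ζ : E} {g : ℕ} (hg : 0 < g) (h : IsPrimitiveRoot ζ g) : g.totient ≤ Module.finrank ℚ E := by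
  obtain rfl : hA = DivisionRing.toRatAlgebra := Subsingleton.elim _ _
  rw [← Polynomial.natDegree_cyclotomic g ℚ, Polynomial.cyclotomic_eq_minpoly_rat h hg]
  exact minpoly.natDegree_le (A := ℚ) ζ

/-- Schinzel-type lemma. -/
theorem schinzel {K F : Type*} [Field K] [NumberField K] [Field F] [Algebra K F]
    [FiniteDimensional K F] [IsGalois K F] {M : ℕ} (hM : 0 < M) {ζ : F} (hζ : IsPrimitiveRoot ζ M)
    {x : F} (hx : x ∈ K⟮ζ⟯) (hx0 : x ≠ 0) {a : K} (ha : x ^ M = algebraMap K F a) :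
    ∃ b : K, a ^ (2 * Module.finrank ℚ K ^ 2).factorial = b ^ M := by
  have : NeZero M := ⟨hM.ne'⟩
  have ha0 : a ≠ 0 := by
    rintro rfl
    rw [map_zero] at ha
    exact hx0 (pow_eq_zero_iff hM.ne' |>.1 ha)
  -- the action on roots of unity
  have hact : ∀ τ : F ≃ₐ[K] F, ∃ k : ℕ, ∀ u : F, u ^ M = 1 → τ u = u ^ k := by
    intro τ
    have h1 : (τ ζ) ^ M = 1 := by rw [← map_pow, hζ.pow_eq_one, map_one]
    obtain ⟨k, -, hk⟩ := hζ.eq_pow_of_pow_eq_one h1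
    refine ⟨k, fun u hu => ?_⟩
    obtain ⟨j, -, rfl⟩ := hζ.eq_pow_of_pow_eq_one hu
    rw [map_pow, ← hk, ← pow_mul, ← pow_mul, mul_comm]
  choose k hk using hact
  have hcomm : ∀ σ τ : F ≃ₐ[K] F, σ (τ x) = τ (σ x) := by
    intro σ τ
    clear hx0 ha
    induction hx using IntermediateField.adjoin_induction with
    | mem y hy =>
      rw [Set.mem_singleton_iff.1 hy]
      rw [hk τ ζ hζ.pow_eq_one, hk σ ζ hζ.pow_eq_one, map_pow, map_pow, hk τ ζ hζ.pow_eq_one, hk σ ζ hζ.pow_eq_one,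
        ← pow_mul, ← pow_mul, mul_comm]
    | algebraMap y => simp
    | add y z _ _ h1 h2 => simp [*]
    | inv y _ h1 => simp [*]
    | mul y z _ _ h1 h2 => simp [*]
  have hy : ∀ τ : F ≃ₐ[K] F, ∃ y : K, a ^ ((k τ : ℤ) - 1) = y ^ M := by
    intro τ
    have hτx : τ x ≠ 0 := by simpa using hx0
    have : x ^ (k τ) / τ x ∈ (⊥ : IntermediateField K F) := by
      rw [IsGalois.mem_bot_iff_fixed]
      intro σ
      have hu : (σ x / x) ^ M = 1 := by
        rw [div_pow, ← map_pow, ha, AlgEquiv.commutes, div_self]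
        rw [← ha]; exact pow_ne_zero _ hx0
      have h2 := hk τ _ hu
      have hσx : σ x ≠ 0 := by simpa using hx0
      rw [map_div₀, map_pow, hcomm]
      have h3 : τ (σ x) ≠ 0 := by simpa using hx0
      rw [map_div₀, div_pow] at h2
      field_simp at h2 ⊢
      linear_combination -h2
    obtain ⟨y, hy⟩ := IntermediateField.mem_bot.1 this
    refine ⟨y, (algebraMap K F).injective ?_⟩
    rw [map_pow, hy, map_zpow₀, ← ha, div_pow, ← map_pow, ha, AlgEquiv.commutes, zpow_sub_one₀ (by simpa using ha0),
      zpow_natCast, ← ha]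
    rw [div_eq_mul_inv]; ring
  let I : AddSubgroup ℤ :=
    { carrier := {j | ∃ y : K, a ^ j = y ^ M}
      zero_mem' := ⟨1, by simp⟩
      add_mem' := by
        rintro i j ⟨y, hy⟩ ⟨z, hz⟩
        exact ⟨y * z, by rw [zpow_add₀ ha0, hy, hz, mul_pow]⟩
      neg_mem' := by
        rintro i ⟨y, hy⟩
        exact ⟨y⁻¹, by rw [zpow_neg, hy, inv_pow]⟩ }
  obtain ⟨g0, hg0⟩ := Int.subgroup_cyclic I
  have hmem : ∀ j : ℤ, j ∈ I ↔ ((g0.natAbs : ℕ) : ℤ) ∣ j := by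
    intro j
    rw [hg0, ← AddSubgroup.zmultiples_eq_closure, Int.mem_zmultiples_iff, Int.natAbs_dvd]
  set g := g0.natAbs
  have hgM : g ∣ M := by
    have : (M : ℤ) ∈ I := ⟨a, by simp⟩
    exact_mod_cast (hmem _).1 this
  have hgpos : 0 < g := Nat.pos_of_dvd_of_pos hgM hM
  obtain ⟨q, hq⟩ := hgM
  have hprim : IsPrimitiveRoot (ζ ^ q) g := hζ.pow hM (by rw [hq, mul_comm])
  have hbot : ζ ^ q ∈ (⊥ : IntermediateField K F) := by
    rw [IsGalois.mem_bot_iff_fixed]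
    intro τ
    rw [map_pow, hk τ ζ hζ.pow_eq_one]
    have h1 : (g : ℤ) ∣ (k τ : ℤ) - 1 := (hmem _).1 (hy τ)
    obtain ⟨c, hc⟩ := h1
    have hz0 : ζ ≠ 0 := hζ.ne_zero hM.ne'
    have : (ζ ^ k τ) ^ q = ζ ^ ((k τ : ℤ) * q) := by rw [zpow_mul]; simp
    rw [this, show (k τ : ℤ) * q = (M : ℤ) * c + q by rw [hq]; push_cast; linear_combination (q:ℤ) * hc,
      zpow_add₀ hz0, zpow_mul]
    simp [hζ.pow_eq_one]
  obtain ⟨z, hz⟩ := IntermediateField.mem_bot.1 hbot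
  have hzprim : IsPrimitiveRoot z g := by
    rw [← hz] at hprim
    exact hprim.of_map_of_injective (algebraMap K F).injective
  have hle := totient_le_finrank_rat hgpos hzprim
  have hgW : g ∣ (2 * Module.finrank ℚ K ^ 2).factorial := by
    apply Nat.dvd_factorial hgpos
    calc g ≤ _ := le_two_mul_totient_sq g
      _ ≤ _ := by gcongr
  have : (((2 * Module.finrank ℚ K ^ 2).factorial : ℕ) : ℤ) ∈ I := (hmem _).2 (by exact_mod_cast hgW)
  obtain ⟨b, hb⟩ := this
  exact ⟨b, by simpa using hb⟩

theorem exists_int_mul {K : Type*} [Field K] [NumberField K] (x : K) :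
    ∃ A : ℤ, A ≠ 0 ∧ IsIntegral ℤ ((A : K) * x) := by
  have : IsAlgebraic ℤ x := (IsFractionRing.isAlgebraic_iff ℤ ℚ K).2 (Algebra.IsAlgebraic.isAlgebraic x)
  obtain ⟨A, hA, h⟩ := this.exists_integral_multiple
  exact ⟨A, hA, by simpa using h⟩

theorem northcott_aux {K : Type*} [Field K] [NumberField K] {r : ℕ} (α : Fin r → K)
    (hα0 : ∀ i, α i ≠ 0) (W : ℕ) : ∃ S : Set K, S.Finite ∧
      ∀ (M : ℕ), 0 < M → ∀ f : Fin r → ℤ, (∀ i, |f i| ≤ W * M) →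
        ∀ b : K, b ^ M = ∏ i, α i ^ f i → b ∈ S := by
  have hA : ∀ i, ∃ A : ℤ, A ≠ 0 ∧ IsIntegral ℤ ((A : K) * α i) ∧ IsIntegral ℤ ((A : K) * (α i)⁻¹) := by
    intro i
    obtain ⟨A, hA, h⟩ := exists_int_mul (α i)
    obtain ⟨B, hB, h'⟩ := exists_int_mul (α i)⁻¹
    have iA : IsIntegral ℤ (A : K) := isIntegral_algebraMap (R := ℤ) (x := A)
    have iB : IsIntegral ℤ (B : K) := isIntegral_algebraMap (R := ℤ) (x := B)
    refine ⟨A * B, mul_ne_zero hA hB, ?_, ?_⟩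
    · have e : ((A * B : ℤ) : K) * α i = B * (A * α i) := by push_cast; ring
      rw [e]; exact iB.mul h
    · have e : ((A * B : ℤ) : K) * (α i)⁻¹ = A * (B * (α i)⁻¹) := by push_cast; ring
      rw [e]; exact iA.mul h'
  choose A hA0 hA1 hA2 using hA
  have hC : ∀ i, ∃ C : ℝ, 1 ≤ C ∧ ∀ φ : K →+* ℂ, ‖φ (A i)‖ ≤ C ∧ ‖φ (A i * α i)‖ ≤ C ∧
      ‖φ (A i * (α i)⁻¹)‖ ≤ C := by
    intro i
    have hn : ∀ φ : K →+* ℂ, 0 ≤ ‖φ (A i)‖ + ‖φ (A i * α i)‖ + ‖φ (A i * (α i)⁻¹)‖ := fun φ => by positivity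
    refine ⟨1 + ∑ φ : K →+* ℂ, (‖φ (A i)‖ + ‖φ (A i * α i)‖ + ‖φ (A i * (α i)⁻¹)‖), ?_, ?_⟩
    · have := Finset.sum_nonneg (fun φ (_ : φ ∈ (Finset.univ : Finset (K →+* ℂ))) => hn φ)
      linarith
    · intro φ
      have := Finset.single_le_sum (fun φ _ => hn φ) (Finset.mem_univ φ)
      have h1 := norm_nonneg (φ (A i))
      have h2 := norm_nonneg (φ (A i * α i))
      have h3 := norm_nonneg (φ (A i * (α i)⁻¹))
      refine ⟨?_, ?_, ?_⟩ <;> linarith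
  choose C hC1 hC2 using hC
  have hfac : ∀ i (N : ℕ) (f : ℤ), |f| ≤ N → IsIntegral ℤ ((A i : K) ^ N * α i ^ f) ∧
      ∀ φ : K →+* ℂ, ‖φ ((A i : K) ^ N * α i ^ f)‖ ≤ C i ^ N := by
    intro i N f hf
    have hf2 : f.natAbs ≤ N := by
      rw [Int.abs_eq_natAbs] at hf
      exact_mod_cast hf
    have iA : IsIntegral ℤ (A i : K) := isIntegral_algebraMap (R := ℤ) (x := A i)
    have key : ∃ z : K, IsIntegral ℤ z ∧ (∀ φ : K →+* ℂ, ‖φ z‖ ≤ C i) ∧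
        ∃ n k : ℕ, N = n + k ∧ (A i : K) ^ N * α i ^ f = (A i : K) ^ k * z ^ n := by
      rcases Int.natAbs_eq f with h | h
      · refine ⟨A i * α i, hA1 i, fun φ => (hC2 i φ).2.1, f.natAbs, N - f.natAbs, by omega, ?_⟩
        obtain ⟨k, rfl⟩ : ∃ k, N = f.natAbs + k := ⟨N - f.natAbs, by omega⟩
        rw [Nat.add_sub_cancel_left]
        conv_lhs => rw [h]
        simp only [zpow_natCast, mul_pow, pow_add, Int.natAbs_natCast]
        ring
      · refine ⟨A i * (α i)⁻¹, hA2 i, fun φ => (hC2 i φ).2.2, f.natAbs, N - f.natAbs, by omega, ?_⟩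
        obtain ⟨k, rfl⟩ : ∃ k, N = f.natAbs + k := ⟨N - f.natAbs, by omega⟩
        rw [Nat.add_sub_cancel_left]
        have : α i ^ f = (α i)⁻¹ ^ f.natAbs := by
          conv_lhs => rw [h]
          rw [zpow_neg, zpow_natCast, inv_pow]
        rw [this, mul_pow, pow_add]
        ring
    obtain ⟨z, hz, hzC, n, k, rfl, h⟩ := key
    rw [h]
    refine ⟨(iA.pow k).mul (hz.pow n), fun φ => ?_⟩
    rw [map_mul, map_pow, map_pow, norm_mul, norm_pow, norm_pow, add_comm, pow_add]
    have h0 : 0 ≤ C i := zero_le_one.trans (hC1 i)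
    gcongr
    · exact (hC2 i φ).1
    · exact hzC φ
  set P : K := ∏ i, (A i : K) ^ W with hP
  have hP0 : P ≠ 0 := Finset.prod_ne_zero_iff.2 fun i _ => pow_ne_zero _ (by exact_mod_cast hA0 i)
  refine ⟨(fun b => b * P) ⁻¹' {x : K | IsIntegral ℤ x ∧ ∀ φ : K →+* ℂ, ‖φ x‖ ≤ ∏ i, C i ^ W},
    (NumberField.Embeddings.finite_of_norm_le K ℂ _).preimage
      ((mul_left_injective₀ hP0).injOn), ?_⟩
  intro M hM f hf b hb
  have hbP : (b * P) ^ M = ∏ i, ((A i : K) ^ (W * M) * α i ^ f i) := by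
    rw [mul_pow, hb, hP, ← Finset.prod_pow, Finset.prod_mul_distrib, mul_comm]
    simp only [pow_mul]
  constructor
  · apply IsIntegral.of_pow hM
    rw [hbP]
    exact IsIntegral.prod _ fun i _ => (hfac i _ _ (by exact_mod_cast hf i)).1
  · intro φ
    have h0 : ∀ i, 0 ≤ C i := fun i => zero_le_one.trans (hC1 i)
    have hpos : 0 ≤ ∏ i, C i ^ W := Finset.prod_nonneg fun i _ => pow_nonneg (h0 i) _
    rw [← pow_le_pow_iff_left₀ (norm_nonneg _) hpos hM.ne', ← norm_pow, ← map_pow, hbP, map_prod,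
      norm_prod, ← Finset.prod_pow]
    refine Finset.prod_le_prod (fun i _ => norm_nonneg _) fun i _ => ?_
    rw [← pow_mul]
    exact (hfac i _ _ (by exact_mod_cast hf i)).2 φ

theorem kummer_count {K : Type*} [Field K] [NumberField K] {r : ℕ} (α : Fin r → K)
    (hα0 : ∀ i, α i ≠ 0) (hind : ∀ e : Fin r → ℤ, ∏ i, α i ^ e i = 1 → e = 0) :
    ∃ C : ℕ, ∀ (F : Type) [Field F] [Algebra K F] [FiniteDimensional K F] [IsGalois K F]
      (M : ℕ) (_ : 0 < M) (m : Fin r → ℕ) (_ : ∀ i, m i ∣ M) (ζ : F) (_ : IsPrimitiveRoot ζ M)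
      (β : Fin r → F) (_ : ∀ i, β i ^ m i = algebraMap K F (α i)),
      ∏ i, m i ≤ C * Module.finrank K⟮ζ⟯ F := by
  classical
  set W := (2 * Module.finrank ℚ K ^ 2).factorial with hW
  have hW0 : 0 < W := Nat.factorial_pos _
  obtain ⟨S, hS, hSb⟩ := northcott_aux α hα0 W
  refine ⟨hS.toFinset.card, ?_⟩
  intro F _ _ _ _ M hM m hmM ζ hζ β hβ
  have : NeZero M := ⟨hM.ne'⟩
  choose q hq using hmM
  have hβ0 : ∀ i, β i ≠ 0 := by
    intro i h
    have h1 := hβ i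
    rcases Nat.eq_zero_or_pos (m i) with h2 | h2
    · have := hq i; rw [h2] at this; omega
    rw [h, zero_pow h2.ne'] at h1
    exact hα0 i ((map_eq_zero _).1 h1.symm)
  let x : (∀ i, Fin (m i)) → F := fun e => ∏ i, β i ^ (e i : ℕ)
  have hx0 : ∀ e, x e ≠ 0 := fun e => Finset.prod_ne_zero_iff.2 fun i _ => pow_ne_zero _ (hβ0 i)
  have hxM : ∀ e, x e ^ M = algebraMap K F (∏ i, α i ^ ((e i : ℕ) * q i)) := by
    intro e
    rw [map_prod, ← Finset.prod_pow]
    refine Finset.prod_congr rfl fun i _ => ?_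
    rw [map_pow, ← hβ i, ← pow_mul, ← pow_mul]
    congr 1
    conv_lhs => rw [hq i]
    ring
  have hfix : ∀ (σ : F ≃ₐ[K⟮ζ⟯] F) (u : F), u ^ M = 1 → σ u = u := by
    intro σ u hu
    obtain ⟨j, -, rfl⟩ := hζ.eq_pow_of_pow_eq_one hu
    have := σ.commutes (⟨ζ, IntermediateField.mem_adjoin_simple_self K ζ⟩ : K⟮ζ⟯)
    rw [map_pow]
    congr 1
  have hroot : ∀ (σ : F ≃ₐ[K⟮ζ⟯] F) e, (σ (x e) / x e) ^ M = 1 := by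
    intro σ e
    have : σ (x e ^ M) = x e ^ M := by
      rw [hxM, IsScalarTower.algebraMap_apply K K⟮ζ⟯ F, σ.commutes]
    rw [div_pow, ← map_pow, this, div_self (pow_ne_zero _ (hx0 e))]
  let χ : (∀ i, Fin (m i)) → ((F ≃ₐ[K⟮ζ⟯] F) →* F) := fun e =>
    { toFun := fun σ => σ (x e) / x e
      map_one' := by simp [hx0 e]
      map_mul' := by
        intro σ τ
        have h1 := hfix σ _ (hroot τ e)
        have h2 : σ (x e) ≠ 0 := by simpa using hx0 e
        have h3 := hx0 e
        rw [map_div₀, div_eq_div_iff h2 h3] at h1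
        rw [AlgEquiv.mul_apply, div_mul_div_comm, div_eq_div_iff h3 (mul_ne_zero h3 h3)]
        linear_combination x e * h1 }
  have himg : (Finset.univ.image χ).card ≤ Module.finrank K⟮ζ⟯ F := by
    have hli := (linearIndependent_monoidHom (F ≃ₐ[K⟮ζ⟯] F) F).comp
      (Subtype.val : (Finset.univ.image χ) → _) Subtype.val_injective
    have := hli.fintype_card_le_finrank
    rw [Fintype.card_coe, Module.finrank_fintype_fun_eq_card, ← Nat.card_eq_fintype_card,
      IsGalois.card_aut_eq_finrank] at this
    exact this
  have hcard : (Finset.univ : Finset (∀ i, Fin (m i))).card = ∏ i, m i := by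
    simp
  rw [← hcard]
  refine (Finset.card_le_mul_card_image (f := χ) Finset.univ hS.toFinset.card ?_).trans
    (Nat.mul_le_mul_left _ himg)
  intro c hc
  obtain ⟨e0, -, rfl⟩ := Finset.mem_image.1 hc
  have hex : ∀ e, ∃ b : K, χ e = χ e0 →
      b ^ M = ∏ i, α i ^ ((W : ℤ) * (((e i : ℕ) : ℤ) - ((e0 i : ℕ) : ℤ)) * q i) := by
    intro e
    by_cases h : χ e = χ e0
    swap
    · exact ⟨0, fun h' => absurd h' h⟩
    have hbot : x e / x e0 ∈ (⊥ : IntermediateField K⟮ζ⟯ F) := by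
      rw [IsGalois.mem_bot_iff_fixed]
      intro σ
      have h1 : σ (x e) / x e = σ (x e0) / x e0 := DFunLike.congr_fun h σ
      have h2 : σ (x e0) ≠ 0 := by simpa using hx0 e0
      rw [div_eq_div_iff (hx0 _) (hx0 _)] at h1
      rw [map_div₀, div_eq_div_iff h2 (hx0 _)]
      linear_combination h1
    obtain ⟨y, hy⟩ := IntermediateField.mem_bot.1 hbot
    have hxL : x e / x e0 ∈ K⟮ζ⟯ := by rw [← hy]; exact y.2
    obtain ⟨b, hb⟩ := schinzel (a := ∏ i, α i ^ ((((e i : ℕ) : ℤ) - ((e0 i : ℕ) : ℤ)) * q i)) hM hζ hxL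
      (div_ne_zero (hx0 _) (hx0 _)) (by
        rw [div_pow, hxM, hxM, ← map_div₀, ← Finset.prod_div_distrib]
        congr 1
        refine Finset.prod_congr rfl fun i _ => ?_
        rw [sub_mul, zpow_sub₀ (hα0 i)]
        norm_cast)
    refine ⟨b, fun _ => ?_⟩
    rw [← hb, ← Finset.prod_pow]
    refine Finset.prod_congr rfl fun i _ => ?_
    rw [← zpow_natCast, ← zpow_mul]
    congr 1
    rw [hW]; ring
  choose b hb using hex
  refine Finset.card_le_card_of_injOn b ?_ ?_
  · intro e he
    have he : χ e = χ e0 := by simpa using he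
    simp only [Set.Finite.coe_toFinset]
    refine hSb M hM _ ?_ _ (hb e he)
    intro i
    have h1 := (e i).2
    have h2 := (e0 i).2
    rw [abs_mul, abs_mul, Nat.abs_cast, Nat.abs_cast, mul_assoc]
    have h3 : |((e i : ℕ) : ℤ) - ((e0 i : ℕ) : ℤ)| ≤ m i := by
      rw [abs_le]; constructor <;> omega
    have h4 : (M : ℤ) = m i * q i := by exact_mod_cast hq i
    rw [h4]
    gcongr
  · intro e he e' he' hbb
    have he : χ e = χ e0 := by simpa using he
    have he' : χ e' = χ e0 := by simpa using he'
    have h1 := hb e he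
    have h2 := hb e' he'
    rw [hbb, h2] at h1
    have h3 := hind (fun i => (W : ℤ) * (((e i : ℕ) : ℤ) - ((e0 i : ℕ) : ℤ)) * q i -
      (W : ℤ) * (((e' i : ℕ) : ℤ) - ((e0 i : ℕ) : ℤ)) * q i) (by
        simp only [zpow_sub₀ (hα0 _)]
        rw [Finset.prod_div_distrib, h1, div_self]
        exact Finset.prod_ne_zero_iff.2 fun i _ => zpow_ne_zero _ (hα0 i))
    funext i
    have h4 := congrFun h3 i
    simp only [Pi.zero_apply] at h4
    have hq0 : (q i : ℤ) ≠ 0 := by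
      intro h
      have h5 : q i = 0 := by exact_mod_cast h
      have := hq i
      rw [h5] at this
      omega
    have hWz : (W : ℤ) ≠ 0 := by exact_mod_cast hW0.ne'
    have h5 : (W : ℤ) * q i * (((e i : ℕ) : ℤ) - (e' i : ℕ)) = 0 := by linear_combination h4
    have h6 := (mul_eq_zero.1 h5).resolve_left (mul_ne_zero hWz hq0)
    apply Fin.ext
    omega

theorem degree_bound {K : Type*} [Field K] [NumberField K] {r : ℕ} (α : Fin r → K)
    (hα0 : ∀ i, α i ≠ 0) (hind : ∀ e : Fin r → ℤ, ∏ i, α i ^ e i = 1 → e = 0) :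
    ∃ C : ℕ, ∀ (F : Type) [Field F] [Algebra K F] [FiniteDimensional K F] [IsGalois K F]
      (M : ℕ) (_ : 0 < M) (m : Fin r → ℕ) (_ : ∀ i, m i ∣ M) (ζ : F) (_ : IsPrimitiveRoot ζ M)
      (β : Fin r → F) (_ : ∀ i, β i ^ m i = algebraMap K F (α i)),
      M.totient * ∏ i, m i ≤ C * Module.finrank K F := by
  obtain ⟨C, hC⟩ := kummer_count α hα0 hind
  refine ⟨Module.finrank ℚ K * C, ?_⟩
  intro F _ _ _ _ M hM m hmM ζ hζ β hβ
  have h1 := hC F M hM m hmM ζ hζ β hβ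
  have : CharZero F := charZero_of_injective_algebraMap (algebraMap K F).injective
  have : CharZero K⟮ζ⟯ := charZero_of_injective_algebraMap (algebraMap K K⟮ζ⟯).injective
  have : FiniteDimensional ℚ K⟮ζ⟯ := FiniteDimensional.trans ℚ K K⟮ζ⟯
  have hz : IsPrimitiveRoot (⟨ζ, IntermediateField.mem_adjoin_simple_self K ζ⟩ : K⟮ζ⟯) M :=
    IsPrimitiveRoot.of_map_of_injective (f := algebraMap K⟮ζ⟯ F) hζ (algebraMap K⟮ζ⟯ F).injective
  have h2 := totient_le_finrank_rat hM hz
  rw [← Module.finrank_mul_finrank ℚ K K⟮ζ⟯] at h2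
  rw [← Module.finrank_mul_finrank K K⟮ζ⟯ F]
  calc _ ≤ _ := Nat.mul_le_mul h2 h1
    _ = _ := by ring

theorem summable_pi_prod {r : ℕ} {f : ℕ+ → ℝ} (hf : Summable f) (h0 : ∀ n, 0 ≤ f n) :
    Summable (fun N : Fin r → ℕ+ => ∏ i, f (N i)) := by
  classical
  refine summable_of_sum_le (c := (∑' n, f n) ^ r) (fun N => Finset.prod_nonneg fun i _ => h0 _) ?_
  intro u
  let s : Finset ℕ+ := u.biUnion fun N => Finset.univ.image N
  have hsub : u ⊆ Fintype.piFinset (fun _ : Fin r => s) := by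
    intro N hN
    rw [Fintype.mem_piFinset]
    intro i
    exact Finset.mem_biUnion.2 ⟨N, hN, Finset.mem_image_of_mem _ (Finset.mem_univ i)⟩
  calc _ ≤ ∑ N ∈ Fintype.piFinset (fun _ : Fin r => s), ∏ i, f (N i) :=
        Finset.sum_le_sum_of_subset_of_nonneg hsub fun N _ _ => Finset.prod_nonneg fun i _ => h0 _
    _ = (∑ n ∈ s, f n) ^ r := by rw [← Finset.prod_univ_sum]; simp
    _ ≤ _ := by
        have := hf.sum_le_tsum s (fun n _ => h0 n)
        have h := Finset.sum_nonneg (fun n (_ : n ∈ s) => h0 n)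
        gcongr

theorem primRoot_isPrimitive {n : ℕ} (hn : n ≠ 0) : IsPrimitiveRoot (primRoot n) n :=
  Complex.isPrimitiveRoot_exp n hn

theorem kummer_degree {r : ℕ} (K : IntermediateField ℚ ℂ)
    [FiniteDimensional ℚ K] (α : Fin r → ℂ)
    (hmem : ∀ i, α i ∈ K) (hα0 : ∀ i, α i ≠ 0)
    (hind : ∀ e : Fin r → ℤ, ∏ i, α i ^ e i = 1 → e = 0) :
    ∃ C : ℕ, ∀ (M : ℕ), 0 < M → ∀ m : Fin r → ℕ, (∀ i, m i ∣ M) →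
      FiniteDimensional K (IntermediateField.extendScalars (base_le_kummer K α M m)) →
      M.totient * ∏ i, m i ≤
        C * Module.finrank K (IntermediateField.extendScalars (base_le_kummer K α M m)) := by
  have : NumberField K := { to_charZero := inferInstance, to_finiteDimensional := inferInstance }
  obtain ⟨C, hC⟩ := degree_bound (K := K) (fun i => ⟨α i, hmem i⟩)
    (fun i h => hα0 i (congrArg Subtype.val h))
    (fun e he => hind e (by
      have := congrArg (algebraMap K ℂ) he
      rw [map_prod, map_one] at this
      rw [← this]
      refine Finset.prod_congr rfl fun i _ => ?_
      rw [map_zpow₀]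
      rfl))
  refine ⟨C, fun M hM m hmM hfin => ?_⟩
  have : NeZero M := ⟨hM.ne'⟩
  have hm0 : ∀ i, 0 < m i := fun i => Nat.pos_of_dvd_of_pos (hmM i) hM
  let p : Polynomial K := (Polynomial.X ^ M - 1) *
    ∏ i, (Polynomial.X ^ m i - Polynomial.C (⟨α i, hmem i⟩ : K))
  have hp0 : p ≠ 0 := by
    refine mul_ne_zero (Polynomial.X_pow_sub_C_ne_zero hM 1) (Finset.prod_ne_zero_iff.2 fun i _ => ?_)
    exact Polynomial.X_pow_sub_C_ne_zero (hm0 i) _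
  have hroot : ∀ z : ℂ, z ∈ p.rootSet ℂ ↔ (z ^ M = 1 ∨ ∃ i, z ^ m i = α i) := by
    intro z
    rw [Polynomial.mem_rootSet]
    simp only [p, map_mul, map_prod, map_sub, map_pow, Polynomial.aeval_X, map_one, Polynomial.aeval_C,
      mul_eq_zero, Finset.prod_eq_zero_iff, sub_eq_zero, Finset.mem_univ, true_and]
    exact ⟨fun h => h.2, fun h => ⟨hp0, h⟩⟩
  let E : IntermediateField K ℂ := IntermediateField.adjoin K (p.rootSet ℂ)
  have hspl : Polynomial.IsSplittingField K E p :=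
    IntermediateField.adjoin_rootSet_isSplittingField (IsAlgClosed.splits _)
  have : FiniteDimensional K E := Polynomial.IsSplittingField.finiteDimensional E p
  have : Normal K E := Normal.of_isSplittingField p
  have : IsGalois K E := {}
  have hprim := primRoot_isPrimitive hM.ne'
  have hle : E ≤ IntermediateField.extendScalars (base_le_kummer K α M m) := by
    rw [IntermediateField.adjoin_le_iff]
    intro z hz
    show z ∈ kummerField K α M m
    have hsub : IntermediateField.adjoin ℚ ({primRoot M} ∪ ⋃ i, {z : ℂ | z ^ (m i) = α i}) ≤
      kummerField K α M m := le_sup_right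
    rcases (hroot z).1 hz with h | ⟨i, h⟩
    · obtain ⟨j, -, rfl⟩ := hprim.eq_pow_of_pow_eq_one h
      refine pow_mem (hsub (IntermediateField.subset_adjoin _ _ (Or.inl rfl))) _
    · exact hsub (IntermediateField.subset_adjoin _ _ (Or.inr (Set.mem_iUnion.2 ⟨i, h⟩)))
  have hβ : ∀ i, ∃ β : E, β ^ m i = algebraMap K E ⟨α i, hmem i⟩ := by
    intro i
    obtain ⟨z, hz⟩ := IsAlgClosed.exists_pow_nat_eq (α i) (hm0 i)
    refine ⟨⟨z, IntermediateField.subset_adjoin _ _ ((hroot z).2 (Or.inr ⟨i, hz⟩))⟩, ?_⟩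
    apply Subtype.ext
    exact hz
  choose β hβ using hβ
  have hζ : IsPrimitiveRoot (⟨primRoot M, IntermediateField.subset_adjoin _ _
      ((hroot _).2 (Or.inl hprim.pow_eq_one))⟩ : E) M :=
    IsPrimitiveRoot.of_map_of_injective (f := algebraMap E ℂ) hprim (algebraMap E ℂ).injective
  have h1 := hC E M hM m hmM _ hζ β hβ
  refine h1.trans (Nat.mul_le_mul_left _ ?_)
  exact LinearMap.finrank_le_finrank_of_injective (f := (IntermediateField.inclusion hle).toLinearMap)
    (IntermediateField.inclusion_injective hle)

end helpers

/-- Let `K ⊆ ℂ` be a number field and `α_1,…,α_r ∈ K^×` multiplicatively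
independent. Fix positive integers `d_1,…,d_r`. Then the family `1/[K_{w,N,T} : K]`,
indexed by all pairs of `r`-tuples `T`, `N` of positive integers, is summable, where
`K_{w,N,T} = K(ζ_{[d_1t_1,…,d_rt_r,n_1t_1,…,n_rt_r]}, α_1^{1/n_1t_1},…,α_r^{1/n_rt_r})`. -/
theorem summable_inv_degree_KwNT {r : ℕ} (K : IntermediateField ℚ ℂ)
    [FiniteDimensional ℚ K] (α : Fin r → ℂ)
    (hmem : ∀ i, α i ∈ K) (hα0 : ∀ i, α i ≠ 0)
    (hind : ∀ e : Fin r → ℤ, ∏ i, α i ^ e i = 1 → e = 0)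
    (d : Fin r → ℕ) (hd : ∀ i, 0 < d i) :
    Summable (fun P : (Fin r → ℕ+) × (Fin r → ℕ+) =>
      (1 : ℝ) / (Module.finrank K (IntermediateField.extendScalars
        (base_le_kummer K α
          (Nat.lcm (Finset.univ.lcm fun i => d i * (P.1 i : ℕ))
            (Finset.univ.lcm fun i => (P.2 i : ℕ) * (P.1 i : ℕ)))
          (fun i => (P.2 i : ℕ) * (P.1 i : ℕ)))) : ℝ)) := by
  classical
  obtain ⟨C, hC⟩ := kummer_degree K α hmem hα0 hind
  set δ : ℝ := 1 / (2 * ((r : ℝ) + 1)) with hδ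
  have hr : (0 : ℝ) ≤ r := Nat.cast_nonneg r
  have hδ0 : 0 < δ := by positivity
  have hrδ : (r : ℝ) * δ ≤ 1 / 2 := by
    rw [hδ, mul_one_div, div_le_div_iff₀ (by positivity) (by positivity)]
    linarith
  let f : ℕ+ → ℝ := fun n => 1 / ((n : ℕ) : ℝ) ^ (1 + δ)
  have hf0 : ∀ n, 0 ≤ f n := fun n => by positivity
  have hf : Summable f := by
    have h1 : Summable (fun n : ℕ => 1 / (n : ℝ) ^ (1 + δ)) :=
      Real.summable_one_div_nat_rpow.2 (by linarith)
    exact h1.comp_injective PNat.coe_injective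
  have hg := summable_pi_prod (r := r) hf hf0
  have hg0 : ∀ N : Fin r → ℕ+, 0 ≤ ∏ i, f (N i) := fun N => Finset.prod_nonneg fun i _ => hf0 _
  have hgg := (hg.mul_of_nonneg hg hg0 hg0).mul_left (Real.sqrt 2 * C)
  refine Summable.of_nonneg_of_le (fun P => by positivity) ?_ hgg
  intro P
  set m : Fin r → ℕ := fun i => (P.2 i : ℕ) * (P.1 i : ℕ) with hm
  set M := Nat.lcm (Finset.univ.lcm fun i => d i * (P.1 i : ℕ)) (Finset.univ.lcm m) with hMdef
  have hm0 : ∀ i, 0 < m i := fun i => Nat.mul_pos (P.2 i).pos (P.1 i).pos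
  have hmM : ∀ i, m i ∣ M := fun i =>
    (Finset.dvd_lcm (Finset.mem_univ i)).trans (Nat.dvd_lcm_right _ _)
  have hM : 0 < M := by
    apply Nat.lcm_pos
    · apply Nat.pos_of_ne_zero
      rw [Ne, Finset.lcm_eq_zero_iff]
      simp [(hd _).ne']
    · apply Nat.pos_of_ne_zero
      rw [Ne, Finset.lcm_eq_zero_iff]
      simp [(hm0 _).ne']
  have hrhs : 0 ≤ Real.sqrt 2 * C * ((∏ i, f (P.1 i)) * ∏ i, f (P.2 i)) :=
    mul_nonneg (by positivity) (mul_nonneg (hg0 _) (hg0 _))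
  set D := Module.finrank K (IntermediateField.extendScalars (base_le_kummer K α M m)) with hD
  rcases Nat.eq_zero_or_pos D with h0 | hDpos
  · rw [h0]
    simpa using hrhs
  have hfin : FiniteDimensional K (IntermediateField.extendScalars (base_le_kummer K α M m)) :=
    Module.finite_of_finrank_pos hDpos
  have h1 : ((M.totient : ℝ)) * ∏ i, (m i : ℝ) ≤ C * D := by
    exact_mod_cast hC M hM m hmM hfin
  have hsq : ((M : ℝ)) ^ (1 / 2 : ℝ) ≤ Real.sqrt 2 * M.totient := by
    rw [← Real.sqrt_eq_rpow]
    apply Real.sqrt_le_iff.2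
    refine ⟨by positivity, ?_⟩
    rw [mul_pow, Real.sq_sqrt (by norm_num)]
    exact_mod_cast le_two_mul_totient_sq M
  have hM1 : (1 : ℝ) ≤ M := by exact_mod_cast hM
  have hprod : ∏ i, (m i : ℝ) ^ δ ≤ (M : ℝ) ^ (1 / 2 : ℝ) := by
    calc ∏ i, (m i : ℝ) ^ δ ≤ ∏ i : Fin r, (M : ℝ) ^ δ := by
          refine Finset.prod_le_prod (fun i _ => by positivity) fun i _ => ?_
          have : (m i : ℝ) ≤ M := by exact_mod_cast Nat.le_of_dvd hM (hmM i)
          gcongr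
      _ = (M : ℝ) ^ ((r : ℝ) * δ) := by
          rw [Finset.prod_const, Finset.card_univ, Fintype.card_fin, mul_comm, Real.rpow_mul (by positivity),
            Real.rpow_natCast]
      _ ≤ _ := Real.rpow_le_rpow_of_exponent_le hM1 hrδ
  have hff : (∏ i, f (P.1 i)) * ∏ i, f (P.2 i) = 1 / ∏ i, (m i : ℝ) ^ (1 + δ) := by
    rw [← Finset.prod_mul_distrib, one_div, ← Finset.prod_inv_distrib]
    refine Finset.prod_congr rfl fun i _ => ?_
    simp only [f, hm]
    push_cast
    rw [Real.mul_rpow (by positivity) (by positivity)]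
    field_simp
  have hQpos : 0 < ∏ i, (m i : ℝ) ^ (1 + δ) := Finset.prod_pos fun i _ => by
    have : (0 : ℝ) < m i := by exact_mod_cast hm0 i
    positivity
  have hDR : (0 : ℝ) < D := by exact_mod_cast hDpos
  have hmain : ∏ i, (m i : ℝ) ^ (1 + δ) ≤ Real.sqrt 2 * C * D := by
    have e : ∏ i, (m i : ℝ) ^ (1 + δ) = (∏ i, (m i : ℝ) ^ δ) * ∏ i, (m i : ℝ) := by
      rw [← Finset.prod_mul_distrib]
      refine Finset.prod_congr rfl fun i _ => ?_
      have : (0 : ℝ) < m i := by exact_mod_cast hm0 i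
      rw [Real.rpow_add this, Real.rpow_one, mul_comm]
    have hmn : 0 ≤ ∏ i, (m i : ℝ) := Finset.prod_nonneg fun i _ => by positivity
    rw [e]
    calc _ ≤ (Real.sqrt 2 * M.totient) * ∏ i, (m i : ℝ) :=
          mul_le_mul_of_nonneg_right (hprod.trans hsq) hmn
      _ = Real.sqrt 2 * (M.totient * ∏ i, (m i : ℝ)) := by ring
      _ ≤ Real.sqrt 2 * (C * D) := mul_le_mul_of_nonneg_left h1 (by positivity)
      _ = _ := by ring
  show (1 : ℝ) / D ≤ _
  simp only [hff]
  rw [mul_one_div, div_le_div_iff₀ hDR hQpos, one_mul]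
  exact hmain
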